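/- arXiv:0709.3120 — 3 statements merged into one kernel-verified Lean document; each statement's English description precedes it below -/
import Mathlib

section
/- Suppose Λ̃ = 0. Then the operator H, defined on the finitely supported sequences in ℓ²(ℤ, ℂ), is essentially self-adjoint; equivalently (by the standard criterion for symmetric operators), both of the sets { (H + i·id)ψ : ψ : ℤ → ℂ finitely supported } and { (H − i·id)ψ : ψ : ℤ → ℂ finitely supported } are dense subsets of ℓ²(ℤ, ℂ). -/
open Filter Topology in
/-- If `f` dominates a positive multiple of `1 / (k + 1)` eventually, then `f` is not summable. -/
theorem not_summable_of_eventually_const_div_le {f : ℕ → ℝ} {t : ℝ} (ht : 0 < t)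
    (h : ∀ᶠ k : ℕ in atTop, t / ((k : ℝ) + 1) ≤ f k) : ¬ Summable f := by
  intro hf
  have h1 : Summable fun k : ℕ => t / ((k : ℝ) + 1) := by
    refine Summable.of_norm_bounded_eventually_nat hf ?_
    filter_upwards [h] with k hk
    rwa [Real.norm_of_nonneg (by positivity)]
  have h2 : Summable fun k : ℕ => 1 / ((k : ℝ) + 1) := by
    refine (h1.mul_left t⁻¹).congr fun k => ?_
    field_simp
  refine Real.not_summable_one_div_natCast ((summable_nat_add_iff 1).1 ?_)
  simpa using h2

/-- The discrete Wronskian-type current `Im (a * conj x * y)` of a Jacobi equation. -/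
noncomputable def jacobiCurrent (a : ℝ) (x y : ℂ) : ℝ :=
  a * (x.re * y.im - x.im * y.re)

theorem jacobiCurrent_swap (a : ℝ) (x y : ℂ) :
    jacobiCurrent a y x = -jacobiCurrent a x y := by
  unfold jacobiCurrent; ring

/-- The step of the current along a solution at a purely imaginary spectral parameter. -/
theorem jacobiCurrent_step {a a' b : ℝ} {w x y z : ℂ} (hw : w.re = 0)
    (h : -(a : ℂ) * x - (a' : ℂ) * z + ((a' : ℂ) + a) * y = w * b * y) :
    jacobiCurrent a' y z = jacobiCurrent a x y - w.im * (b * Complex.normSq y) := by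
  have h1 := congrArg Complex.re h
  have h2 := congrArg Complex.im h
  simp [hw] at h1 h2
  simp only [jacobiCurrent, Complex.normSq_apply]
  linear_combination y.im * h1 - y.re * h2

open Filter Topology in
/-- At a limit-point end with weights `b k ≳ 1 / (k + 1)` and `a k ≲ k + 1`, the current of a
square-summable solution at a purely imaginary spectral parameter vanishes at infinity. -/
theorem tendsto_jacobiCurrent_zero {a b : ℕ → ℝ} {φ : ℕ → ℂ} {w : ℂ} {β C : ℝ}
    (hβ : 0 < β) (ha : ∀ k, 0 < a k) (haC : ∀ k : ℕ, a k ≤ C * ((k : ℝ) + 1))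
    (hb : ∀ k : ℕ, β / ((k : ℝ) + 1) ≤ b k) (hw : w.re = 0)
    (hφ : ∀ k, -(a k : ℂ) * φ k - (a (k + 1) : ℂ) * φ (k + 2)
      + ((a (k + 1) : ℂ) + a k) * φ (k + 1) = w * b (k + 1) * φ (k + 1))
    (hs : Summable fun k => b k * Complex.normSq (φ k)) :
    Tendsto (fun k => jacobiCurrent (a k) (φ k) (φ (k + 1))) atTop (𝓝 0) := by
  have hC : 0 < C := by have := ha 0; have := haC 0; norm_num at this; linarith
  have hb0 : ∀ k, 0 < b k := fun k => lt_of_lt_of_le (by positivity) (hb k)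
  set q : ℕ → ℝ := fun k => jacobiCurrent (a k) (φ k) (φ (k + 1)) with hq
  set r : ℕ → ℝ := fun k => a k * ((φ k).re * ((φ (k + 1)).re - (φ k).re)
    + (φ k).im * ((φ (k + 1)).im - (φ k).im)) with hr
  set e : ℕ → ℝ := fun k => a k * Complex.normSq (φ (k + 1) - φ k) with he
  have he0 : ∀ k, 0 ≤ e k := fun k => mul_nonneg (ha k).le (Complex.normSq_nonneg _)
  have hr_step : ∀ k, r (k + 1) = r k + e k := by
    intro k
    have h1 := congrArg Complex.re (hφ k)
    have h2 := congrArg Complex.im (hφ k)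
    simp [hw] at h1 h2
    simp only [hr, he, Complex.normSq_apply, Complex.sub_re, Complex.sub_im]
    linear_combination -(φ (k + 1)).re * h1 - (φ (k + 1)).im * h2
  have hr_mono : Monotone r := monotone_nat_of_le_succ fun k => by
    rw [hr_step]; linarith [he0 k]
  have hr_le : ∀ k, 2 * r k ≤ a k * (Complex.normSq (φ (k + 1)) - Complex.normSq (φ k)) := by
    intro k
    have := he0 k
    simp only [he, hr, Complex.normSq_apply, Complex.sub_re, Complex.sub_im] at this ⊢
    linarith
  have hr_nonpos : ∀ k, r k ≤ 0 := by
    intro m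
    by_contra! hm
    have hlt : ∀ k, m ≤ k → Complex.normSq (φ k) < Complex.normSq (φ (k + 1)) := by
      intro k hk
      have h1 : 0 < a k * (Complex.normSq (φ (k + 1)) - Complex.normSq (φ k)) := by
        linarith [hr_le k, hr_mono hk]
      linarith [(mul_pos_iff_of_pos_left (ha k)).1 h1]
    have ht : 0 < Complex.normSq (φ (m + 1)) :=
      (Complex.normSq_nonneg _).trans_lt (hlt m le_rfl)
    refine not_summable_of_eventually_const_div_le (mul_pos hβ ht) ?_ hs
    filter_upwards [eventually_ge_atTop (m + 1)] with k hk
    have hmono : Complex.normSq (φ (m + 1)) ≤ Complex.normSq (φ k) := by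
      induction k, hk using Nat.le_induction with
      | base => exact le_rfl
      | succ k hk ih => exact ih.trans (hlt k (by omega)).le
    calc β * Complex.normSq (φ (m + 1)) / ((k : ℝ) + 1)
        = β / ((k : ℝ) + 1) * Complex.normSq (φ (m + 1)) := by ring
      _ ≤ b k * Complex.normSq (φ k) :=
        mul_le_mul (hb k) hmono ht.le (hb0 k).le
  have he_sum : Summable e := by
    have hsum : ∀ n, r n = r 0 + ∑ k ∈ Finset.range n, e k := by
      intro n
      induction n with
      | zero => simp
      | succ n ih => rw [hr_step, ih, Finset.sum_range_succ]; ring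
    exact summable_of_sum_range_le (c := -r 0) he0 fun n => by
      linarith [hsum n, hr_nonpos n]
  have hq_step : ∀ n, q n = q 0 - w.im *
      ∑ k ∈ Finset.range n, b (k + 1) * Complex.normSq (φ (k + 1)) := by
    intro n
    induction n with
    | zero => simp
    | succ n ih =>
      have h1 : q (n + 1) = q n - w.im * (b (n + 1) * Complex.normSq (φ (n + 1))) :=
        jacobiCurrent_step hw (hφ n)
      rw [h1, ih, Finset.sum_range_succ]; ring
  obtain ⟨L, hL⟩ : ∃ L, Tendsto q atTop (𝓝 L) := by
    have h1 := ((summable_nat_add_iff 1).2 hs).hasSum.tendsto_sum_nat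
    exact ⟨_, ((h1.const_mul w.im).const_sub (q 0)).congr fun n => (hq_step n).symm⟩
  suffices hL0 : L = 0 by rwa [hL0] at hL
  by_contra hL0
  have hLpos : 0 < |L| := abs_pos.2 hL0
  have hκ : 0 < Real.sqrt (β / C) := Real.sqrt_pos.2 (div_pos hβ hC)
  refine not_summable_of_eventually_const_div_le (f := fun k => b k * Complex.normSq (φ k) + e k)
    (mul_pos hκ (half_pos hLpos)) ?_ (hs.add he_sum)
  filter_upwards [hL.abs.eventually (lt_mem_nhds (half_lt_self hLpos))] with k hk
  have hk1 : (0 : ℝ) < (k : ℝ) + 1 := by positivity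
  have hX : 0 ≤ b k * Complex.normSq (φ k) := mul_nonneg (hb0 k).le (Complex.normSq_nonneg _)
  refine abs_le_of_sq_le_sq' ?_ (add_nonneg hX (he0 k)) |>.2
  have hcs : (q k) ^ 2 ≤ (a k) ^ 2 * (Complex.normSq (φ k) * Complex.normSq (φ (k + 1) - φ k)) := by
    simp only [hq, jacobiCurrent, Complex.normSq_apply, Complex.sub_re, Complex.sub_im]
    nlinarith [sq_nonneg (a k * ((φ k).re * ((φ (k + 1)).re - (φ k).re)
      + (φ k).im * ((φ (k + 1)).im - (φ k).im)))]
  have hsq : (|L| / 2) ^ 2 ≤ (q k) ^ 2 := by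
    rw [← sq_abs (q k)]
    exact pow_le_pow_left₀ (by positivity) hk.le 2
  have hratio : β / C / ((k : ℝ) + 1) ^ 2 * (a k) ^ 2 ≤ b k * a k := by
    have h1 : β / C / ((k : ℝ) + 1) ^ 2 * a k ≤ b k := by
      calc β / C / ((k : ℝ) + 1) ^ 2 * a k
          ≤ β / C / ((k : ℝ) + 1) ^ 2 * (C * ((k : ℝ) + 1)) := by
            gcongr; exact haC k
        _ = β / ((k : ℝ) + 1) := by field_simp
        _ ≤ b k := hb k
    nlinarith [ha k]
  have hN : 0 ≤ Complex.normSq (φ k) * Complex.normSq (φ (k + 1) - φ k) :=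
    mul_nonneg (Complex.normSq_nonneg _) (Complex.normSq_nonneg _)
  calc (Real.sqrt (β / C) * (|L| / 2) / ((k : ℝ) + 1)) ^ 2
      = β / C / ((k : ℝ) + 1) ^ 2 * (|L| / 2) ^ 2 := by
        rw [div_pow, mul_pow, Real.sq_sqrt (by positivity)]; ring
    _ ≤ β / C / ((k : ℝ) + 1) ^ 2 *
        ((a k) ^ 2 * (Complex.normSq (φ k) * Complex.normSq (φ (k + 1) - φ k))) := by
        gcongr; exact hsq.trans hcs
    _ ≤ b k * a k * (Complex.normSq (φ k) * Complex.normSq (φ (k + 1) - φ k)) := by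
        rw [← mul_assoc]; exact mul_le_mul_of_nonneg_right hratio hN
    _ = b k * Complex.normSq (φ k) * e k := by simp only [he]; ring
    _ ≤ (b k * Complex.normSq (φ k) + e k) ^ 2 := by nlinarith [he0 k]

open Filter Topology in
/-- A square-summable solution on `ℤ` at a non-real, purely imaginary spectral parameter is zero
when both ends satisfy the growth bounds of `tendsto_jacobiCurrent_zero`. -/
theorem eq_zero_of_jacobi_eq {a b : ℤ → ℝ} {φ : ℤ → ℂ} {w : ℂ} {β C : ℝ} (N : ℤ)
    (hβ : 0 < β) (hb0 : ∀ n, 0 < b n)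
    (ha : ∀ k : ℕ, 0 < a (N + k)) (haC : ∀ k : ℕ, a (N + k) ≤ C * ((k : ℝ) + 1))
    (hb : ∀ k : ℕ, β / ((k : ℝ) + 1) ≤ b (N + k))
    (ha' : ∀ k : ℕ, 0 < a (-N - k - 1)) (haC' : ∀ k : ℕ, a (-N - k - 1) ≤ C * ((k : ℝ) + 1))
    (hb' : ∀ k : ℕ, β / ((k : ℝ) + 1) ≤ b (-N - k))
    (hw : w.re = 0) (hw' : w.im ≠ 0)
    (hφ : ∀ n, -(a (n - 1) : ℂ) * φ (n - 1) - (a n : ℂ) * φ (n + 1)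
      + ((a n : ℂ) + a (n - 1)) * φ n = w * b n * φ n)
    (hs : Summable fun n => b n * Complex.normSq (φ n)) : ∀ n, φ n = 0 := by
  set W : ℤ → ℝ := fun n => jacobiCurrent (a n) (φ n) (φ (n + 1)) with hW
  have hstep : ∀ n, W n = W (n - 1) - w.im * (b n * Complex.normSq (φ n)) := by
    intro n
    have := jacobiCurrent_step hw (hφ n)
    simpa [hW] using this
  have hright : Tendsto (fun k : ℕ => W (N + k)) atTop (𝓝 0) := by
    have := tendsto_jacobiCurrent_zero (φ := fun k : ℕ => φ (N + k)) (w := w)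
      hβ ha haC hb hw ?_ (hs.comp_injective (i := fun k : ℕ => N + (k : ℤ)) ?_)
    · simpa [hW, add_assoc] using this
    · intro k
      have h := hφ (N + k + 1)
      simp only [add_sub_cancel_right] at h
      have e1 : N + (k : ℤ) + 1 + 1 = N + ((k + 2 : ℕ) : ℤ) := by push_cast; ring
      have e2 : N + (k : ℤ) + 1 = N + ((k + 1 : ℕ) : ℤ) := by push_cast; ring
      rw [e1, e2] at h
      exact h
    · intro x y h; simpa using h
  have hleft : Tendsto (fun k : ℕ => W (-N - k - 1)) atTop (𝓝 0) := by
    have := tendsto_jacobiCurrent_zero (φ := fun k : ℕ => φ (-N - k)) (w := w)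
      hβ ha' haC' hb' hw ?_ (hs.comp_injective (i := fun k : ℕ => -N - (k : ℤ)) ?_)
    · rw [← neg_zero]
      refine this.neg.congr fun k => ?_
      have e1 : -N - ((k + 1 : ℕ) : ℤ) = -N - k - 1 := by push_cast; ring
      simp only [hW, e1, sub_add_cancel]
      rw [jacobiCurrent_swap, neg_neg]
    · intro k
      have h := hφ (-N - (k + 1 : ℕ))
      have e1 : -N - ((k + 1 : ℕ) : ℤ) + 1 = -N - k := by push_cast; ring
      have e2 : -N - ((k + 1 : ℕ) : ℤ) - 1 = -N - ((k + 2 : ℕ) : ℤ) := by push_cast; ring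
      have e3 : -N - (k : ℤ) - 1 = -N - ((k + 1 : ℕ) : ℤ) := by push_cast; ring
      rw [e1] at h
      simp only [e3]
      rw [← e2] at *
      linear_combination h
    · intro x y h; simpa using h
  have hd0 : ∀ n, 0 ≤ b n * Complex.normSq (φ n) := fun n =>
    mul_nonneg (hb0 n).le (Complex.normSq_nonneg _)
  have hanti : Antitone fun n => W n / w.im := by
    refine antitone_int_of_succ_le fun n => ?_
    have h := hstep (n + 1)
    rw [add_sub_cancel_right] at h
    simp only [h]
    rw [sub_div, mul_div_cancel_left₀ _ hw']
    linarith [hd0 (n + 1)]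
  have hzero : ∀ n, W n = 0 := by
    intro n
    have h1 : 0 ≤ W n / w.im := by
      have ht := hright.div_const w.im
      rw [zero_div] at ht
      refine le_of_tendsto ht ?_
      filter_upwards [eventually_ge_atTop (n - N).toNat] with k hk
      exact hanti (by omega)
    have h2 : W n / w.im ≤ 0 := by
      have ht := hleft.div_const w.im
      rw [zero_div] at ht
      refine ge_of_tendsto ht ?_
      filter_upwards [eventually_ge_atTop (-N - n).toNat] with k hk
      exact hanti (by omega)
    exact (div_eq_zero_iff.1 (le_antisymm h2 h1)).resolve_right hw'
  intro n
  have h := hstep n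
  rw [hzero, hzero, zero_sub, eq_comm, neg_eq_zero] at h
  exact Complex.normSq_eq_zero.1
    (((mul_eq_zero.1 h).resolve_left hw' |> mul_eq_zero.1).resolve_left (hb0 n).ne')

/-- The range of `H + z` on finitely supported sequences is dense in `ℓ²(ℤ)` as soon as the
equation `H f = -conj z f` has only the zero solution in `ℓ²(ℤ)`. -/
theorem dense_range_jacobi_add {c d : ℤ → ℝ} {H : (ℤ → ℂ) → (ℤ → ℂ)}
    (hH : ∀ (ψ : ℤ → ℂ) (n : ℤ),
      H ψ n = -(c (n - 1) : ℂ) * ψ (n - 1) - (c n : ℂ) * ψ (n + 1) + (d n : ℂ) * ψ n)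
    (z : ℂ)
    (hz : ∀ f : lp (fun _ : ℤ => ℂ) 2,
      (∀ n, H f n = -(starRingEnd ℂ) z * f n) → f = 0) :
    Dense {f : lp (fun _ : ℤ => ℂ) 2 |
      ∃ ψ : ℤ → ℂ, (Function.support ψ).Finite ∧ ∀ n : ℤ, f n = H ψ n + z * ψ n} := by
  let S : Submodule ℂ (lp (fun _ : ℤ => ℂ) 2) :=
    { carrier := {f | ∃ ψ : ℤ → ℂ, (Function.support ψ).Finite ∧ ∀ n : ℤ, f n = H ψ n + z * ψ n}
      zero_mem' := ⟨0, by simp, fun n => by simp [hH]⟩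
      add_mem' := by
        rintro f g ⟨ψ, hψ, hf⟩ ⟨χ, hχ, hg⟩
        refine ⟨ψ + χ, (hψ.union hχ).subset (Function.support_add _ _), fun n => ?_⟩
        rw [lp.coeFn_add, Pi.add_apply, hf, hg]
        simp only [hH, Pi.add_apply]
        ring
      smul_mem' := by
        rintro t f ⟨ψ, hψ, hf⟩
        refine ⟨t • ψ, hψ.subset (Function.support_const_smul_subset _ _), fun n => ?_⟩
        rw [lp.coeFn_smul, Pi.smul_apply, hf]
        simp only [hH, Pi.smul_apply, smul_eq_mul]
        ring }
  change Dense (S : Set (lp (fun _ : ℤ => ℂ) 2))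
  rw [Submodule.dense_iff_topologicalClosure_eq_top, Submodule.topologicalClosure_eq_top_iff,
    Submodule.eq_bot_iff]
  intro f hf
  refine hz f fun n => ?_
  have hmem : lp.single 2 (n - 1) (-(c (n - 1) : ℂ)) + lp.single 2 (n + 1) (-(c n : ℂ))
      + lp.single 2 n ((d n : ℂ) + z) ∈ S := by
    refine ⟨Pi.single n 1, (Set.finite_singleton n).subset Pi.support_single_subset, fun m => ?_⟩
    rw [hH]
    simp only [lp.coeFn_add, Pi.add_apply, lp.coeFn_single]
    rcases eq_or_ne m n with rfl | h1
    · simp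
    rcases eq_or_ne m (n - 1) with rfl | h2
    · have h3 : n - 1 ≠ n + 1 := by omega
      have h4 : n - 1 - 1 ≠ n := by omega
      simp [h1, h3, h4]
    rcases eq_or_ne m (n + 1) with rfl | h3
    · have h5 : n + 1 + 1 ≠ n := by omega
      simp [h1, h2, h5]
    have h4 : m - 1 ≠ n := by omega
    have h5 : m + 1 ≠ n := by omega
    simp [h1, h2, h3, h4, h5]
  have h := (Submodule.mem_orthogonal S f).1 hf _ hmem
  simp only [inner_add_left, lp.inner_single_left, RCLike.inner_apply, map_neg, map_add,
    Complex.conj_ofReal] at h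
  rw [hH]
  linear_combination h

/-- A weight `B v = |v|⁻¹ (1 + α / v² + O(v⁻⁴))` is eventually at least `1 / (2 |v|)`. -/
theorem exists_le_of_abs_mul_sub_le {B : ℝ → ℝ} {α C₀ M₀ : ℝ} (hC₀ : 0 < C₀)
    (hB : ∀ v : ℝ, M₀ ≤ |v| → abs (|v| * B v - 1 - α / v ^ 2) ≤ C₀ / v ^ 4) :
    ∃ M : ℝ, ∀ v : ℝ, M ≤ |v| → 1 / (2 * |v|) ≤ B v := by
  refine ⟨max M₀ (1 + 2 * (|α| + C₀)), fun v hv => ?_⟩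
  have h1 : 1 + 2 * (|α| + C₀) ≤ |v| := (le_max_right _ _).trans hv
  have h2 := (abs_le.1 (hB v ((le_max_left _ _).trans hv))).1
  have hα := abs_nonneg α
  have hv1 : 1 ≤ |v| := by linarith
  have hv2 : |v| ≤ v ^ 2 := by rw [← sq_abs]; nlinarith
  have hv4 : v ^ 2 ≤ v ^ 4 := by nlinarith
  have h3 : |α / v ^ 2| + C₀ / v ^ 4 ≤ 1 / 2 := by
    rw [abs_div, abs_of_nonneg (sq_nonneg v)]
    calc |α| / v ^ 2 + C₀ / v ^ 4 ≤ |α| / v ^ 2 + C₀ / v ^ 2 := by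
          gcongr; linarith
      _ = (|α| + C₀) / v ^ 2 := by ring
      _ ≤ 1 / 2 := by rw [div_le_iff₀ (by linarith)]; linarith
  have h4 := neg_abs_le (α / v ^ 2)
  rw [div_le_iff₀ (by linarith)]
  linarith

/-- The only solution of `H f = w f` in `ℓ²(ℤ)` for non-real, purely imaginary `w` is zero. -/
theorem aps_eq_zero_of_eigen {G ε α : ℝ} (hG : 0 < G) (hε : ε ∈ Set.Ioo (0 : ℝ) 4)
    {A B : ℝ → ℝ}
    (hA : ∃ R > (0 : ℝ), ∀ v : ℝ, R ≤ |v| → A v = 3 * Real.pi * G / 4 * |v|)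
    (hB : ∃ C₀ > (0 : ℝ), ∃ M₀ > (0 : ℝ), ∀ v : ℝ, M₀ ≤ |v| →
      abs (|v| * B v - 1 - α / v ^ 2) ≤ C₀ / v ^ 4)
    (hBpos : ∀ n : ℤ, 0 < B (4 * (n : ℝ) + ε))
    {w : ℂ} (hw : w.re = 0) (hw' : w.im ≠ 0) (f : lp (fun _ : ℤ => ℂ) 2)
    (hf : ∀ n : ℤ,
      -((A (4 * ((n - 1 : ℤ) : ℝ) + ε + 2) / Real.sqrt (B (4 * ((n - 1 : ℤ) : ℝ) + ε) *
        B (4 * (((n - 1 : ℤ) : ℝ) + 1) + ε)) : ℝ) : ℂ) * f (n - 1)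
      - ((A (4 * (n : ℝ) + ε + 2) / Real.sqrt (B (4 * (n : ℝ) + ε) *
        B (4 * ((n : ℝ) + 1) + ε)) : ℝ) : ℂ) * f (n + 1)
      + (((A (4 * (n : ℝ) + ε + 2) + A (4 * (n : ℝ) + ε - 2)) /
        B (4 * (n : ℝ) + ε) : ℝ) : ℂ) * f n = w * f n) : f = 0 := by
  obtain ⟨hε0, hε4⟩ := hε
  obtain ⟨R, hR, hA⟩ := hA
  obtain ⟨C₀, hC₀, M₀, -, hB⟩ := hB
  obtain ⟨M, hM⟩ := exists_le_of_abs_mul_sub_le hC₀ hB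
  set K : ℝ := 3 * Real.pi * G / 4 with hKdef
  have hK : 0 < K := by have := Real.pi_pos; positivity
  set b : ℤ → ℝ := fun n => B (4 * (n : ℝ) + ε) with hb
  set a : ℤ → ℝ := fun n => A (4 * (n : ℝ) + ε + 2) with ha
  set φ : ℤ → ℂ := fun n => f n / (Real.sqrt (b n) : ℂ) with hφ
  have hb0 : ∀ n, 0 < b n := hBpos
  have hsb : ∀ n, 0 < Real.sqrt (b n) := fun n => Real.sqrt_pos.2 (hb0 n)
  have hsbC : ∀ n, (Real.sqrt (b n) : ℂ) ≠ 0 := fun n => by exact_mod_cast (hsb n).ne'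
  have hfφ : ∀ n, f n = Real.sqrt (b n) * φ n := fun n => by
    simp only [hφ]; rw [mul_div_cancel₀ _ (hsbC n)]
  obtain ⟨N, hN⟩ := exists_nat_ge (max (max R M) 0 + 4)
  have hNR : R + 4 ≤ N := by linarith [le_max_left (max R M) 0, le_max_left R M]
  have hNM : M + 4 ≤ N := by linarith [le_max_left (max R M) 0, le_max_right R M]
  have hN4 : (4 : ℝ) ≤ N := by linarith [le_max_right (max R M) 0]
  set D : ℝ := 4 * N + 8 with hD
  have hD0 : 0 < D := by positivity
  have hDk : ∀ k : ℕ, 4 * ((N : ℝ) + k) + 8 ≤ D * ((k : ℝ) + 1) := fun k => by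
    have : (0 : ℝ) ≤ k := Nat.cast_nonneg k
    rw [hD]; nlinarith
  have hAbound : ∀ (k : ℕ) (v : ℝ), N ≤ |v| → |v| ≤ 4 * ((N : ℝ) + k) + 8 →
      0 < A v ∧ A v ≤ K * D * ((k : ℝ) + 1) := by
    intro k v h1 h2
    rw [hA v (by linarith)]
    refine ⟨mul_pos hK (by linarith), ?_⟩
    rw [mul_assoc]
    exact mul_le_mul_of_nonneg_left (h2.trans (hDk k)) hK.le
  have hBbound : ∀ (k : ℕ) (v : ℝ), N ≤ |v| → |v| ≤ 4 * ((N : ℝ) + k) + 8 →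
      1 / (2 * D) / ((k : ℝ) + 1) ≤ B v := by
    intro k v h1 h2
    refine le_trans ?_ (hM v (by linarith))
    rw [div_div]
    have : 0 < |v| := by linarith
    apply one_div_le_one_div_of_le (by positivity)
    linarith [hDk k]
  have key := eq_zero_of_jacobi_eq (a := a) (b := b) (φ := φ) (w := w) (β := 1 / (2 * D))
    (C := K * D) (N : ℤ) (by positivity) hb0 ?_ ?_ ?_ ?_ ?_ ?_ hw hw' ?_ ?_
  · ext n
    rw [hfφ, key]; simp
  · intro k
    have hk : (0 : ℝ) ≤ k := Nat.cast_nonneg k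
    refine (hAbound k _ ?_ ?_).1 <;> push_cast <;> rw [abs_of_pos (by linarith)] <;> linarith
  · intro k
    have hk : (0 : ℝ) ≤ k := Nat.cast_nonneg k
    refine (hAbound k _ ?_ ?_).2 <;> push_cast <;> rw [abs_of_pos (by linarith)] <;> linarith
  · intro k
    have hk : (0 : ℝ) ≤ k := Nat.cast_nonneg k
    refine hBbound k _ ?_ ?_ <;> push_cast <;> rw [abs_of_pos (by linarith)] <;> linarith
  · intro k
    have hk : (0 : ℝ) ≤ k := Nat.cast_nonneg k
    refine (hAbound k _ ?_ ?_).1 <;> push_cast <;> rw [abs_of_neg (by linarith)] <;> linarith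
  · intro k
    have hk : (0 : ℝ) ≤ k := Nat.cast_nonneg k
    refine (hAbound k _ ?_ ?_).2 <;> push_cast <;> rw [abs_of_neg (by linarith)] <;> linarith
  · intro k
    have hk : (0 : ℝ) ≤ k := Nat.cast_nonneg k
    refine hBbound k _ ?_ ?_ <;> push_cast <;> rw [abs_of_neg (by linarith)] <;> linarith
  · intro n
    have e1 : B (4 * (((n - 1 : ℤ) : ℝ) + 1) + ε) = b n := by simp [hb]
    have e2 : B (4 * ((n : ℝ) + 1) + ε) = b (n + 1) := by simp [hb]
    have e3 : A (4 * (n : ℝ) + ε - 2) = a (n - 1) := by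
      simp only [ha]; push_cast; congr 1; ring
    have h := hf n
    rw [e1, e2, e3] at h
    change -((a (n - 1) / Real.sqrt (b (n - 1) * b n) : ℝ) : ℂ) * f (n - 1)
      - ((a n / Real.sqrt (b n * b (n + 1)) : ℝ) : ℂ) * f (n + 1)
      + (((a n + a (n - 1)) / b n : ℝ) : ℂ) * f n = w * f n at h
    have hsq : (b n : ℂ) = (Real.sqrt (b n) : ℂ) ^ 2 := by
      exact_mod_cast (Real.sq_sqrt (hb0 n).le).symm
    rw [Real.sqrt_mul (hb0 (n - 1)).le, Real.sqrt_mul (hb0 n).le, hfφ (n - 1), hfφ n,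
      hfφ (n + 1)] at h
    push_cast at h
    rw [hsq] at h ⊢
    have h0 := hsbC n
    have h1 := hsbC (n - 1)
    have h2 := hsbC (n + 1)
    field_simp at h
    linear_combination h
  · have hs : Summable fun n => ‖f n‖ ^ 2 := by
      simpa using (lp.memℓp f).summable (by norm_num)
    refine hs.congr fun n => ?_
    rw [hfφ n, norm_mul, mul_pow, Complex.norm_real, Real.norm_of_nonneg (hsb n).le,
      Real.sq_sqrt (hb0 n).le, Complex.normSq_eq_norm_sq]


/-- STATEMENT 0: If Λ̃ = 0, the APS operator H, defined on the finitely supported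
sequences in ℓ²(ℤ, ℂ), is essentially self-adjoint, i.e. the ranges of H ± i·id on
finitely supported sequences are dense in ℓ²(ℤ, ℂ). -/
theorem aps_essentially_selfAdjoint_of_zero_cosmological_constant
    (G ε α Λ : ℝ) (hG : 0 < G) (hε : ε ∈ Set.Ioo (0 : ℝ) 4) (hΛ : Λ = 0)
    (A B : ℝ → ℝ)
    (hA : ∃ R > (0 : ℝ), ∀ v : ℝ, R ≤ |v| → A v = 3 * Real.pi * G / 4 * |v|)
    (hB : ∃ C₀ > (0 : ℝ), ∃ M₀ > (0 : ℝ), ∀ v : ℝ, M₀ ≤ |v| →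
      abs (|v| * B v - 1 - α / v ^ 2) ≤ C₀ / v ^ 4)
    (hBpos : ∀ n : ℤ, 0 < B (4 * (n : ℝ) + ε))
    (c d : ℤ → ℝ)
    (hc : ∀ n : ℤ, c n = A (4 * (n : ℝ) + ε + 2) /
      Real.sqrt (B (4 * (n : ℝ) + ε) * B (4 * ((n : ℝ) + 1) + ε)))
    (hd : ∀ n : ℤ, d n = (A (4 * (n : ℝ) + ε + 2) + A (4 * (n : ℝ) + ε - 2)
      + Λ * |4 * (n : ℝ) + ε|) / B (4 * (n : ℝ) + ε))
    (H : (ℤ → ℂ) → (ℤ → ℂ))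
    (hH : ∀ (ψ : ℤ → ℂ) (n : ℤ),
      H ψ n = -(c (n - 1) : ℂ) * ψ (n - 1) - (c n : ℂ) * ψ (n + 1) + (d n : ℂ) * ψ n) :
    Dense {f : lp (fun _ : ℤ => ℂ) 2 |
      ∃ ψ : ℤ → ℂ, (Function.support ψ).Finite ∧
        ∀ n : ℤ, f n = H ψ n + Complex.I * ψ n} ∧
    Dense {f : lp (fun _ : ℤ => ℂ) 2 |
      ∃ ψ : ℤ → ℂ, (Function.support ψ).Finite ∧
        ∀ n : ℤ, f n = H ψ n - Complex.I * ψ n} := by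
  subst hΛ
  have hzero : ∀ z : ℂ, z.re = 0 → z.im ≠ 0 → ∀ f : lp (fun _ : ℤ => ℂ) 2,
      (∀ n, H f n = -(starRingEnd ℂ) z * f n) → f = 0 := by
    intro z hz hz' f hf
    refine aps_eq_zero_of_eigen hG hε hA hB hBpos (w := -(starRingEnd ℂ) z) (by simp [hz])
      (by simpa using hz') f fun n => ?_
    have h := hf n
    rw [hH, hc, hc, hd, zero_mul, add_zero] at h
    exact h
  refine ⟨dense_range_jacobi_add hH Complex.I (hzero _ (by simp) (by simp)), ?_⟩
  simpa [sub_eq_add_neg] using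
    dense_range_jacobi_add hH (-Complex.I) (hzero _ (by simp) (by simp))
end

section
/- There exist constants C > 0 and M > 0 such that for every real v with |v| ≥ M one has | Ã(v)/√(B̃(v+2)·B̃(v−2)) − (3πG/4)·(v² − 2 − α) | ≤ C/v². (In particular B̃(v+2)·B̃(v−2) > 0 for such v, so the left-hand side is well defined.) -/
/-- The product of the two shifted factors `1 + a / (v ± 2) ^ 2 + O(v⁻⁴)` is
`1 + 2 a / v ^ 2 + O(v⁻⁴)`: the odd-order terms cancel. -/
theorem abs_mul_shifted_sub_le {a c v x y : ℝ} (hv : 4 ≤ |v|)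
    (hx : |x - 1 - a / (v + 2) ^ 2| ≤ c / (v + 2) ^ 4)
    (hy : |y - 1 - a / (v - 2) ^ 2| ≤ c / (v - 2) ^ 4) (hc : 0 < c) :
    |x * y - 1 - 2 * a / v ^ 2| ≤
      (48 * |a| + 2 * a ^ 2 + 32 * c * (1 + |a|) + 256 * c ^ 2) / (v ^ 2) ^ 2 := by
  have hw : 16 ≤ v ^ 2 := by
    rw [← sq_abs]; nlinarith
  have hs : v ^ 2 / 4 ≤ (v + 2) ^ 2 := by
    rcases le_abs.1 hv with h | h <;> nlinarith
  have ht : v ^ 2 / 4 ≤ (v - 2) ^ 2 := by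
    rcases le_abs.1 hv with h | h <;> nlinarith
  have hst : (v + 2) ^ 2 * (v - 2) ^ 2 = (v ^ 2 - 4) ^ 2 := by ring
  have hsum : (v + 2) ^ 2 + (v - 2) ^ 2 = 2 * v ^ 2 + 8 := by ring
  rw [show (v + 2) ^ 4 = ((v + 2) ^ 2) ^ 2 by ring] at hx
  rw [show (v - 2) ^ 4 = ((v - 2) ^ 2) ^ 2 by ring] at hy
  generalize (v + 2) ^ 2 = s at *
  generalize (v - 2) ^ 2 = t at *
  generalize v ^ 2 = w at *
  have hw0 : 0 < w := by linarith
  have hs0 : 0 < s := by linarith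
  have ht0 : 0 < t := by linarith
  have inv_sq {u : ℝ} (hu : w / 4 ≤ u) : c / u ^ 2 ≤ 16 * c / w ^ 2 := by
    have : 0 < u := by linarith
    rw [div_le_div_iff₀ (by positivity) (by positivity)]
    have : w ^ 2 ≤ 16 * u ^ 2 := by nlinarith
    nlinarith
  have div_le {u : ℝ} (hu : w / 4 ≤ u) : |1 + a / u| ≤ 1 + |a| := by
    have hu1 : 1 ≤ u := by linarith
    refine (abs_add_le _ _).trans ?_
    rw [abs_one, abs_div, abs_of_pos (by linarith : 0 < u)]
    gcongr
    exact div_le_self (abs_nonneg a) hu1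
  obtain ⟨e, rfl⟩ : ∃ e, x = 1 + a / s + e := ⟨x - 1 - a / s, by ring⟩
  obtain ⟨f, rfl⟩ : ∃ f, y = 1 + a / t + f := ⟨y - 1 - a / t, by ring⟩
  have he : |e| ≤ 16 * c / w ^ 2 := by
    refine le_trans (le_of_eq ?_) (hx.trans (inv_sq hs)); congr 1; ring
  have hf : |f| ≤ 16 * c / w ^ 2 := by
    refine le_trans (le_of_eq ?_) (hy.trans (inv_sq ht)); congr 1; ring
  have hprod : w ^ 2 / 2 ≤ s * t := by rw [hst]; nlinarith
  have hlin : |a * (1 / s + 1 / t - 2 / w)| ≤ 48 * |a| / w ^ 2 := by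
    have key : 1 / s + 1 / t - 2 / w = (24 * w - 32) / (w * (s * t)) := by
      field_simp
      linear_combination w * hsum - 2 * hst
    have hnn : 0 ≤ 24 * w - 32 := by linarith
    rw [key, abs_mul, abs_of_nonneg (div_nonneg hnn (by positivity)), mul_comm 48, mul_div_assoc]
    gcongr |a| * ?_
    rw [div_le_div_iff₀ (by positivity) (by positivity)]
    have := mul_le_mul_of_nonneg_left hprod hw0.le
    nlinarith [sq_nonneg w]
  have hquad : |a ^ 2 / (s * t)| ≤ 2 * a ^ 2 / w ^ 2 := by
    rw [abs_of_nonneg (by positivity), div_le_div_iff₀ (by positivity) (by positivity)]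
    nlinarith [sq_nonneg a]
  have he' : |e * (1 + a / t)| ≤ 16 * c / w ^ 2 * (1 + |a|) := by
    rw [abs_mul]; exact mul_le_mul he (div_le ht) (abs_nonneg _) (by positivity)
  have hf' : |f * (1 + a / s)| ≤ 16 * c / w ^ 2 * (1 + |a|) := by
    rw [abs_mul]; exact mul_le_mul hf (div_le hs) (abs_nonneg _) (by positivity)
  have hef : |e * f| ≤ 256 * c ^ 2 / w ^ 2 := by
    have hf1 : |f| ≤ 16 * c := hf.trans (div_le_self (by positivity) (by nlinarith))
    rw [abs_mul]
    refine (mul_le_mul he hf1 (abs_nonneg _) (by positivity)).trans_eq (by ring)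
  have hdecomp : (1 + a / s + e) * (1 + a / t + f) - 1 - 2 * a / w =
      a * (1 / s + 1 / t - 2 / w) + a ^ 2 / (s * t) + e * (1 + a / t) + f * (1 + a / s)
        + e * f := by
    field_simp; ring
  calc _ ≤ 48 * |a| / w ^ 2 + 2 * a ^ 2 / w ^ 2 + 16 * c / w ^ 2 * (1 + |a|)
        + 16 * c / w ^ 2 * (1 + |a|) + 256 * c ^ 2 / w ^ 2 := by
        rw [hdecomp, abs_le]
        rw [abs_le] at hlin hquad he' hf' hef
        constructor <;> linarith
    _ = _ := by ring

/-- If `q = 1 + 2 a / w + O(w⁻²)` then `√(w (w - 4) / q) = w - 2 - a + O(w⁻¹)`. -/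
theorem abs_sqrt_div_sub_le {a c w q : ℝ} (hc : 0 ≤ c) (hw : 16 + 8 * |a| + 4 * c ≤ w)
    (hq : |q - 1 - 2 * a / w| ≤ c / w ^ 2) :
    0 < q ∧ |√(w * (w - 4) / q) - (w - 2 - a)| ≤
      4 * ((2 + a) ^ 2 + 4 * |a| * |2 + a| + 2 * |a| * (2 + a) ^ 2 + 4 * c) / w := by
  have ha := abs_nonneg a
  obtain ⟨ha₁, ha₂⟩ := abs_le.1 (le_refl |a|)
  have hw0 : 0 < w := by linarith
  have hw1 : 1 ≤ w := by linarith
  obtain ⟨r, rfl⟩ : ∃ r, q = 1 + 2 * a / w + r := ⟨q - 1 - 2 * a / w, by ring⟩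
  have hr : |r| ≤ c / w ^ 2 := by
    refine le_trans (le_of_eq ?_) hq; congr 1; ring
  have hq2 : 1 / 2 ≤ 1 + 2 * a / w + r := by
    have h₁ : |2 * a / w| ≤ 1 / 4 := by
      rw [abs_div, abs_of_pos hw0, abs_mul, abs_two, div_le_iff₀ hw0]; linarith
    have h₂ : c / w ^ 2 ≤ 1 / 4 := by
      rw [div_le_iff₀ (by positivity)]; nlinarith
    linarith [(abs_le.1 h₁).1, (abs_le.1 (hr.trans h₂)).1]
  have hq0 : 0 < 1 + 2 * a / w + r := by linarith
  refine ⟨hq0, ?_⟩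
  set d := (2 + a) ^ 2 + 4 * |a| * |2 + a| + 2 * |a| * (2 + a) ^ 2 + 4 * c with hd
  have hd0 : 0 ≤ d := by positivity
  have hT : w / 2 ≤ w - 2 - a := by linarith
  have hT2 : w - 2 - a ≤ 2 * w := by linarith
  have hnum : |w * (w - 4) - (1 + 2 * a / w + r) * (w - 2 - a) ^ 2| ≤ d := by
    have hrT : |r * (w - 2 - a) ^ 2| ≤ 4 * c := by
      rw [abs_mul, abs_of_nonneg (sq_nonneg (w - 2 - a))]
      calc _ ≤ c / w ^ 2 * (2 * w) ^ 2 := by gcongr; linarith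
        _ = _ := by field_simp; ring
    have hab : |4 * a * (2 + a)| = 4 * |a| * |2 + a| := by
      rw [abs_mul, abs_mul, abs_of_pos (by norm_num : (0 : ℝ) < 4)]
    have hab2 : |2 * a * (2 + a) ^ 2 / w| ≤ 2 * |a| * (2 + a) ^ 2 := by
      rw [abs_div, abs_of_pos hw0, abs_mul, abs_mul, abs_two, abs_of_nonneg (sq_nonneg (2 + a))]
      exact div_le_self (by positivity) hw1
    have hexp : w * (w - 4) - (1 + 2 * a / w + r) * (w - 2 - a) ^ 2 =
        -(2 + a) ^ 2 + 4 * a * (2 + a) - 2 * a * (2 + a) ^ 2 / w - r * (w - 2 - a) ^ 2 := by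
      field_simp; ring
    have hab' := abs_le.1 hab.le
    rw [abs_le] at hrT hab2
    rw [hexp, hd, abs_le]
    constructor <;> linarith [sq_nonneg (2 + a), hab'.1, hab'.2]
  generalize 1 + 2 * a / w + r = q at *
  set X := w * (w - 4) / q with hX
  have hX0 : 0 ≤ X := div_nonneg (mul_nonneg hw0.le (by linarith)) hq0.le
  have hXT : |X - (w - 2 - a) ^ 2| ≤ 2 * d := by
    have : X - (w - 2 - a) ^ 2 = (w * (w - 4) - q * (w - 2 - a) ^ 2) / q := by
      rw [hX]; field_simp
    rw [this, abs_div, abs_of_pos hq0, div_le_iff₀ hq0]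
    nlinarith
  have hfac : X - (w - 2 - a) ^ 2 = (√X - (w - 2 - a)) * (√X + (w - 2 - a)) := by
    linear_combination -(Real.sq_sqrt hX0)
  have hsum : w / 2 ≤ √X + (w - 2 - a) := by linarith [Real.sqrt_nonneg X]
  rw [hfac, abs_mul, abs_of_pos (by linarith : 0 < √X + (w - 2 - a))] at hXT
  rw [le_div_iff₀ hw0]
  have := mul_le_mul_of_nonneg_left hsum (abs_nonneg (√X - (w - 2 - a)))
  linarith

/-- asymptotic expansion Ã(v)/√(B̃(v+2)·B̃(v−2)) = (3πG/4)(v²−2−α) + O(1/v²). -/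
theorem aps_expansion_offdiagonal_coefficient
    (G α : ℝ) (hG : 0 < G)
    (A B : ℝ → ℝ)
    (hA : ∃ R > (0 : ℝ), ∀ v : ℝ, R ≤ |v| → A v = 3 * Real.pi * G / 4 * |v|)
    (hB : ∃ C₀ > (0 : ℝ), ∃ M₀ > (0 : ℝ), ∀ v : ℝ, M₀ ≤ |v| →
      abs (|v| * B v - 1 - α / v ^ 2) ≤ C₀ / v ^ 4) :
    ∃ C > (0 : ℝ), ∃ M > (0 : ℝ), ∀ v : ℝ, M ≤ |v| →
      0 < B (v + 2) * B (v - 2) ∧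
      abs (A v / Real.sqrt (B (v + 2) * B (v - 2))
          - 3 * Real.pi * G / 4 * (v ^ 2 - 2 - α)) ≤ C / v ^ 2 := by
  obtain ⟨R, hR, hA⟩ := hA
  obtain ⟨c, hc, M₀, hM₀, hB⟩ := hB
  set c₁ := 48 * |α| + 2 * α ^ 2 + 32 * c * (1 + |α|) + 256 * c ^ 2
  have hc₁0 : 0 < c₁ := by positivity
  set d := (2 + α) ^ 2 + 4 * |α| * |2 + α| + 2 * |α| * (2 + α) ^ 2 + 4 * c₁
  have hd0 : 0 < d := by positivity
  have hpi := Real.pi_pos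
  refine ⟨3 * Real.pi * G / 4 * (4 * d), by positivity,
    R + M₀ + 16 + 8 * |α| + 4 * c₁, by positivity, fun v hv => ?_⟩
  have hα := abs_nonneg α
  have hv4 : 4 ≤ |v| := by linarith
  have hplus : |v| - 2 ≤ |v + 2| := by
    have := abs_sub_abs_le_abs_sub v (-2); simpa using this
  have hminus : |v| - 2 ≤ |v - 2| := by
    have := abs_sub_abs_le_abs_sub v 2; simpa using this
  have hw : 16 + 8 * |α| + 4 * c₁ ≤ v ^ 2 := by
    rw [← sq_abs]; nlinarith
  obtain ⟨hq, hsqrt⟩ := abs_sqrt_div_sub_le hc₁0.le hw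
    (abs_mul_shifted_sub_le hv4 (hB (v + 2) (by linarith)) (hB (v - 2) (by linarith)) hc)
  have habs : |v + 2| * |v - 2| = v ^ 2 - 4 := by
    rw [← abs_mul, abs_of_nonneg] <;> nlinarith
  have hq' : |v + 2| * B (v + 2) * (|v - 2| * B (v - 2)) =
      (v ^ 2 - 4) * (B (v + 2) * B (v - 2)) := by
    rw [← habs]; ring
  have hw4 : 0 < v ^ 2 - 4 := by linarith
  rw [hq'] at hq hsqrt
  have hP : 0 < B (v + 2) * B (v - 2) := pos_of_mul_pos_right hq hw4.le
  refine ⟨hP, ?_⟩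
  have hdiv : v ^ 2 * (v ^ 2 - 4) / ((v ^ 2 - 4) * (B (v + 2) * B (v - 2))) =
      v ^ 2 / (B (v + 2) * B (v - 2)) := by
    rw [mul_comm (v ^ 2), mul_div_mul_left _ _ hw4.ne']
  rw [hdiv, Real.sqrt_div (sq_nonneg v), Real.sqrt_sq_eq_abs] at hsqrt
  rw [hA v (by linarith), mul_div_assoc, ← mul_sub, abs_mul,
    abs_of_pos (by positivity : 0 < 3 * Real.pi * G / 4), mul_div_assoc _ (4 * d)]
  gcongr
end

section
/- Suppose Λ̃ = 0. Define the simplified operator H' on finitely supported ψ : ℤ → ℂ by (H'ψ)(n) = (3πG/4)·[ −((v_n−2)² − 2 − α)·ψ(n−1) − ((v_n+2)² − 2 − α)·ψ(n+1) + (2v_n² − 2α)·ψ(n) ]. Then there exists a constant C > 0 such that for every n ∈ ℤ: | c(n) − (3πG/4)·((v_n+2)² − 2 − α) | ≤ C/(1 + v_n²) and | d(n) − (3πG/4)·(2v_n² − 2α) | ≤ C/(1 + v_n²). (Hence the matrix coefficients of the difference H − H' decay at least as fast as v_n⁻².) -/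
open Filter Topology Asymptotics

theorem tendsto_add_const_cocompact_real (a : ℝ) :
    Tendsto (fun v : ℝ => v + a) (cocompact ℝ) (cocompact ℝ) :=
  (Homeomorph.addRight a).isClosedEmbedding.tendsto_cocompact

theorem eventually_le_abs_cocompact_real (M : ℝ) : ∀ᶠ v : ℝ in cocompact ℝ, M ≤ |v| :=
  (tendsto_norm_cocompact_atTop (E := ℝ)).eventually_ge_atTop M

theorem eventually_add_ne_zero_cocompact_real (a : ℝ) : ∀ᶠ v : ℝ in cocompact ℝ, v + a ≠ 0 := by
  filter_upwards [(tendsto_add_const_cocompact_real a).eventually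
    (eventually_le_abs_cocompact_real 1)] with v hv h
  simp [h] at hv
  linarith

theorem tendsto_inv_add_const_cocompact_real (a : ℝ) :
    Tendsto (fun v : ℝ => (v + a)⁻¹) (cocompact ℝ) (𝓝 0) := by
  have h := tendsto_inv₀_cobounded (α := ℝ)
  rw [Metric.cobounded_eq_cocompact] at h
  exact h.comp (tendsto_add_const_cocompact_real a)

theorem tendsto_add_div_add_cocompact_real (a b : ℝ) :
    Tendsto (fun v : ℝ => (v + a) / (v + b)) (cocompact ℝ) (𝓝 1) := by
  have h : Tendsto (fun v : ℝ => 1 + (a - b) * (v + b)⁻¹) (cocompact ℝ) (𝓝 (1 + (a - b) * 0)) :=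
    tendsto_const_nhds.add (tendsto_const_nhds.mul (tendsto_inv_add_const_cocompact_real b))
  rw [mul_zero, add_zero] at h
  refine h.congr' ?_
  filter_upwards [eventually_add_ne_zero_cocompact_real b] with v hv
  field_simp
  ring

/-- The rescaled remainder in the expansion `|v| B v = 1 + α / v ^ 2 + O(v⁻⁴)`. -/
noncomputable def inverseVolumeRemainder (α : ℝ) (B : ℝ → ℝ) (v : ℝ) : ℝ :=
  v ^ 4 * (|v| * B v - 1 - α / v ^ 2)

theorem abs_mul_eq_of_inverseVolumeRemainder (α : ℝ) (B : ℝ → ℝ) {v : ℝ} (hv : v ≠ 0) :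
    |v| * B v = 1 + α * v⁻¹ ^ 2 + inverseVolumeRemainder α B v * v⁻¹ ^ 4 := by
  unfold inverseVolumeRemainder
  field_simp
  ring

theorem boundedAtFilter_inverseVolumeRemainder {α : ℝ} {B : ℝ → ℝ}
    (hB : ∃ C₀ > (0 : ℝ), ∃ M₀ > (0 : ℝ), ∀ v : ℝ, M₀ ≤ |v| →
      abs (|v| * B v - 1 - α / v ^ 2) ≤ C₀ / v ^ 4) :
    BoundedAtFilter (cocompact ℝ) (inverseVolumeRemainder α B) := by
  obtain ⟨C₀, -, M₀, hM₀, h⟩ := hB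
  refine IsBigO.of_bound C₀ ?_
  filter_upwards [eventually_le_abs_cocompact_real M₀] with v hv
  have hv0 : v ≠ 0 := abs_pos.mp (hM₀.trans_le hv)
  have hv4 : 0 < v ^ 4 := by positivity
  have := h v hv
  rw [le_div_iff₀ hv4] at this
  simp only [inverseVolumeRemainder, Pi.one_apply, norm_one, mul_one, Real.norm_eq_abs, abs_mul,
    abs_of_pos hv4]
  linarith

theorem tendsto_abs_mul_of_boundedAtFilter {α : ℝ} {B : ℝ → ℝ}
    (hE : BoundedAtFilter (cocompact ℝ) (inverseVolumeRemainder α B)) :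
    Tendsto (fun v => |v| * B v) (cocompact ℝ) (𝓝 1) := by
  have hp : Tendsto (fun v : ℝ => v⁻¹) (cocompact ℝ) (𝓝 0) := by
    simpa using tendsto_inv_add_const_cocompact_real 0
  have hrem : Tendsto (fun v => inverseVolumeRemainder α B v * v⁻¹ ^ 4) (cocompact ℝ) (𝓝 0) := by
    have hp4 : Tendsto (fun v : ℝ => v⁻¹ ^ 4) (cocompact ℝ) (𝓝 0) := by simpa using hp.pow 4
    have := hE.mul_isLittleO ((isLittleO_one_iff ℝ).2 hp4)
    exact (isLittleO_one_iff ℝ).1 (this.congr_right fun _ => by simp)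
  have h := (((hp.pow 2).const_mul α).const_add 1).add hrem
  simp only [ne_eq, OfNat.ofNat_ne_zero, not_false_eq_true, zero_pow, mul_zero, add_zero] at h
  refine h.congr' ?_
  filter_upwards [eventually_add_ne_zero_cocompact_real 0] with v hv
  rw [add_zero] at hv
  exact (abs_mul_eq_of_inverseVolumeRemainder α B hv).symm

theorem isBigO_diagonal_coefficient {K α : ℝ} {A B : ℝ → ℝ}
    (hA : ∀ᶠ v in cocompact ℝ, A v = K * |v|)
    (hE : BoundedAtFilter (cocompact ℝ) (inverseVolumeRemainder α B)) :
    (fun v => (A (v + 2) + A (v - 2)) / B v - K * (2 * v ^ 2 - 2 * α))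
      =O[cocompact ℝ] fun v : ℝ => (v ^ 2)⁻¹ := by
  set E := inverseVolumeRemainder α B with hEdef
  have hp : BoundedAtFilter (cocompact ℝ) (fun v : ℝ => v⁻¹) := by
    have := (tendsto_inv_add_const_cocompact_real 0).isBigO_one ℝ
    simp only [add_zero] at this
    exact this
  have hnum : BoundedAtFilter (cocompact ℝ)
      ((fun _ => α ^ 2) - E + (fun _ => α) * E * (fun v : ℝ => v⁻¹) ^ 2) := by
    have hconst (x : ℝ) : (fun _ => x) ∈ boundedFilterSubalgebra ℝ (cocompact ℝ) :=
      Filter.const_boundedAtFilter _ x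
    exact add_mem (sub_mem (hconst _) hE) (mul_mem (mul_mem (hconst _) hE) (pow_mem hp 2))
  obtain ⟨C, hC⟩ := hnum.bound
  refine IsBigO.of_bound (4 * |K| * C) ?_
  have hb := (tendsto_abs_mul_of_boundedAtFilter hE).eventually_const_lt (u := 1 / 2) (by norm_num)
  filter_upwards [hC, hb, eventually_le_abs_cocompact_real 2,
    (tendsto_add_const_cocompact_real 2).eventually hA,
    (tendsto_add_const_cocompact_real (-2)).eventually hA] with v hC hb hv hA₁ hA₂
  have hv0 : v ≠ 0 := by rintro rfl; norm_num at hv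
  have hsum : |v + 2| + |v - 2| = 2 * |v| := by
    rcases le_abs'.mp hv with h | h
    · rw [abs_of_nonpos (by linarith), abs_of_nonpos (by linarith), abs_of_nonpos (by linarith)]
      ring
    · rw [abs_of_nonneg (by linarith), abs_of_nonneg (by linarith), abs_of_nonneg (by linarith)]
      ring
  have hA₂' : A (v - 2) = K * |v - 2| := hA₂
  have hbeq := abs_mul_eq_of_inverseVolumeRemainder α B hv0
  rw [← hEdef] at hbeq
  have hB0 : B v ≠ 0 := by rintro h; rw [h] at hb; norm_num at hb
  have hval : (A (v + 2) + A (v - 2)) / B v - K * (2 * v ^ 2 - 2 * α)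
      = 2 * K * (α ^ 2 - E v + α * E v * v⁻¹ ^ 2) * (v ^ 2)⁻¹ / (|v| * B v) := by
    rw [hA₁, hA₂', ← mul_add, hsum, eq_div_iff (by positivity)]
    have h1 : (K * (2 * |v|) / B v - K * (2 * v ^ 2 - 2 * α)) * (|v| * B v)
        = 2 * K * |v| ^ 2 - K * (2 * v ^ 2 - 2 * α) * (|v| * B v) := by
      field_simp
    rw [h1, sq_abs, hbeq]
    field_simp
    ring
  simp only [Pi.add_apply, Pi.sub_apply, Pi.mul_apply, Pi.pow_apply, Pi.one_apply, norm_one,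
    mul_one, Real.norm_eq_abs] at hC
  rw [hval, Real.norm_eq_abs, Real.norm_eq_abs, abs_div, abs_of_pos (by linarith : 0 < |v| * B v),
    div_le_iff₀ (by linarith), abs_mul, abs_mul, abs_mul, abs_two]
  have hC0 : 0 ≤ C := (abs_nonneg _).trans hC
  calc 2 * |K| * |α ^ 2 - E v + α * E v * v⁻¹ ^ 2| * |(v ^ 2)⁻¹|
      ≤ 2 * |K| * C * |(v ^ 2)⁻¹| := by gcongr
    _ = 4 * |K| * C * |(v ^ 2)⁻¹| * (1 / 2) := by ring
    _ ≤ 4 * |K| * C * |(v ^ 2)⁻¹| * (|v| * B v) := by gcongr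

theorem isBigO_offDiagonal_coefficient {K α : ℝ} {A B : ℝ → ℝ}
    (hA : ∀ᶠ v in cocompact ℝ, A v = K * |v|)
    (hE : BoundedAtFilter (cocompact ℝ) (inverseVolumeRemainder α B)) :
    (fun v => A (v + 2) / √(B v * B (v + 4)) - K * ((v + 2) ^ 2 - 2 - α))
      =O[cocompact ℝ] fun v : ℝ => (v ^ 2)⁻¹ := by
  set E := inverseVolumeRemainder α B with hEdef
  set S := boundedFilterSubalgebra ℝ (β := ℝ) (cocompact ℝ)
  have hconst (x : ℝ) : (fun _ => x) ∈ S := Filter.const_boundedAtFilter _ x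
  have hadd {f g : ℝ → ℝ} (hf : f ∈ S) (hg : g ∈ S) : f + g ∈ S := add_mem hf hg
  have hmul {f g : ℝ → ℝ} (hf : f ∈ S) (hg : g ∈ S) : f * g ∈ S := mul_mem hf hg
  have hpow {f : ℝ → ℝ} (n : ℕ) (hf : f ∈ S) : f ^ n ∈ S := pow_mem hf n
  have hsub {f g : ℝ → ℝ} (hf : f ∈ S) (hg : g ∈ S) : f - g ∈ S := sub_mem hf hg
  obtain ⟨F, hF⟩ : ∃ F : ℝ → ℝ, F = fun v => E (v + 4) := ⟨_, rfl⟩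
  obtain ⟨s, hs⟩ : ∃ s : ℝ → ℝ, s = fun v => (v + 2)⁻¹ := ⟨_, rfl⟩
  obtain ⟨k, hk⟩ : ∃ k : ℝ → ℝ, k = fun v => (v + 2) / v := ⟨_, rfl⟩
  obtain ⟨l, hl⟩ : ∃ l : ℝ → ℝ, l = fun v => (v + 2) / (v + 4) := ⟨_, rfl⟩
  have hES : E ∈ S := hE
  have hFS : F ∈ S := hF ▸ hE.comp_tendsto (tendsto_add_const_cocompact_real 4)
  have hsS : s ∈ S := hs ▸ (tendsto_inv_add_const_cocompact_real 2).isBigO_one ℝ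
  have hkS : k ∈ S := by
    have := (tendsto_add_div_add_cocompact_real 2 0).isBigO_one ℝ
    simp only [add_zero] at this
    exact hk ▸ this
  have hlS : l ∈ S := hl ▸ (tendsto_add_div_add_cocompact_real 2 4).isBigO_one ℝ
  -- the product of the two inverse-volume factors is `1 + 2 α s ^ 2 + r s ^ 4`
  obtain ⟨r, hr⟩ : ∃ r : ℝ → ℝ, r =
      (fun _ => α) * ((fun _ => 24) - (fun _ => 32) * s ^ 2) * k ^ 2 * l ^ 2
      + (fun _ => α ^ 2) * k ^ 2 * l ^ 2 + E * k ^ 4 + F * l ^ 4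
      + (fun _ => α) * s ^ 2 * (k ^ 2 * F * l ^ 4 + E * k ^ 4 * l ^ 2)
      + s ^ 4 * E * F * k ^ 4 * l ^ 4 := ⟨_, rfl⟩
  have hrS : r ∈ S := by
    rw [hr]
    repeat' first
      | assumption
      | exact hconst _
      | with_reducible apply hadd
      | with_reducible apply hsub
      | with_reducible apply hmul
      | with_reducible apply hpow
  obtain ⟨D, hD⟩ : ∃ D : ℝ → ℝ, D = ((fun _ => 1) - (fun _ => 2) * s) ^ 2 * ((fun _ => -(2 + α) ^ 2 + 4 * α * (2 + α))
      - (fun _ => 2 * α * (2 + α) ^ 2) * s ^ 2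
      - r * ((fun _ => 1) - (fun _ => 2 + α) * s ^ 2) ^ 2) := ⟨_, rfl⟩
  have hDS : D ∈ S := by
    rw [hD]
    repeat' first
      | assumption
      | exact hconst _
      | with_reducible apply hadd
      | with_reducible apply hsub
      | with_reducible apply hmul
      | with_reducible apply hpow
  obtain ⟨C, hC⟩ := IsBigO.bound (show BoundedAtFilter (cocompact ℝ) D from hDS)
  refine IsBigO.of_bound (4 * |K| * C) ?_
  have hb := tendsto_abs_mul_of_boundedAtFilter hE
  have hbb := hb.mul (hb.comp (tendsto_add_const_cocompact_real 4))
  rw [mul_one] at hbb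
  have hbb' := hbb.eventually_const_lt (u := 1 / 2) (by norm_num)
  filter_upwards [hC, hbb', (tendsto_add_const_cocompact_real 2).eventually hA,
    (tendsto_add_const_cocompact_real 2).eventually
      (eventually_le_abs_cocompact_real (3 + 2 * (2 + |α|)))] with v hC hbb hA hw
  have hα := abs_nonneg α
  have hw1 : 3 ≤ |v + 2| := by linarith
  have hwsq : 2 * (2 + |α|) ≤ (v + 2) ^ 2 := by
    rw [← sq_abs]; nlinarith
  have hw9 : 9 ≤ (v + 2) ^ 2 := by rw [← sq_abs]; nlinarith
  have hw0 : v + 2 ≠ 0 := by intro h; rw [h] at hw1; norm_num at hw1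
  have hv0 : v ≠ 0 := by rintro rfl; norm_num at hw9
  have hv4 : v + 4 ≠ 0 := by
    intro h; rw [show v + 2 = -2 by linarith] at hw9; norm_num at hw9
  have hprod : 0 < v * (v + 4) := by nlinarith
  set y := (v + 2) ^ 2 - 2 - α with hy
  have hylow : (v + 2) ^ 2 / 2 ≤ y := by have := le_abs_self α; rw [hy]; linarith
  have hypos : 0 < y := by linarith
  set P := |v| * B v * (|v + 4| * B (v + 4)) with hP
  have hPhalf : 1 / 2 < P := hbb
  have hPeq : P = 1 + 2 * α * s v ^ 2 + r v * s v ^ 4 := by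
    rw [hP, abs_mul_eq_of_inverseVolumeRemainder α B hv0,
      abs_mul_eq_of_inverseVolumeRemainder α B hv4, ← hEdef, hr]
    simp only [Pi.add_apply, Pi.sub_apply, Pi.mul_apply, Pi.pow_apply, hs, hk, hl, hF]
    generalize E v = e
    generalize E (v + 4) = f
    field_simp
    ring
  -- the coefficient divided by `K`
  set X := |v + 2| / √(B v * B (v + 4)) with hX
  have hXnonneg : 0 ≤ X := by positivity
  have hBB : B v * B (v + 4) = P / (v * (v + 4)) := by
    rw [hP, eq_div_iff hprod.ne', ← abs_of_pos hprod, abs_mul]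
    ring
  have hXsq : X ^ 2 * P = (v + 2) ^ 2 * (v * (v + 4)) := by
    have hP0 : 0 < P := by linarith
    rw [hX, hBB, div_pow, Real.sq_sqrt (by positivity), sq_abs]
    field_simp
  have hdiff : (X - y) * ((X + y) * P) * v ^ 2 = D v * (v + 2) ^ 2 := by
    have h1 : (X - y) * ((X + y) * P) = X ^ 2 * P - y ^ 2 * P := by ring
    rw [h1, hXsq, hPeq, hD]
    simp only [Pi.sub_apply, Pi.mul_apply, Pi.pow_apply, hs, hy]
    generalize r v = q
    field_simp
    ring
  simp only [Pi.one_apply, norm_one, mul_one, Real.norm_eq_abs] at hC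
  have hC0 : 0 ≤ C := (abs_nonneg _).trans hC
  have hden : (v + 2) ^ 2 / 4 ≤ (X + y) * P := by nlinarith
  have hXy : |X - y| ≤ 4 * C * (v ^ 2)⁻¹ := by
    have habs := congrArg abs hdiff
    have hw2 : 0 < (v + 2) ^ 2 := by positivity
    have hv2 : 0 < v ^ 2 := by positivity
    rw [abs_mul, abs_mul, abs_mul (D v), abs_of_pos hw2, abs_of_pos hv2,
      abs_of_pos (by linarith : 0 < (X + y) * P)] at habs
    rw [← div_eq_mul_inv, le_div_iff₀ hv2]
    refine le_of_mul_le_mul_right ?_ hw2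
    calc |X - y| * v ^ 2 * (v + 2) ^ 2
        = 4 * (|X - y| * ((v + 2) ^ 2 / 4) * v ^ 2) := by ring
      _ ≤ 4 * (|X - y| * ((X + y) * P) * v ^ 2) := by gcongr
      _ = 4 * |D v| * (v + 2) ^ 2 := by rw [habs]; ring
      _ ≤ 4 * C * (v + 2) ^ 2 := by gcongr
  have hval : A (v + 2) / √(B v * B (v + 4)) - K * y = K * (X - y) := by
    rw [hA, hX]; ring
  rw [hval, norm_mul, Real.norm_eq_abs, Real.norm_eq_abs,
    Real.norm_of_nonneg (by positivity : 0 ≤ (v ^ 2)⁻¹)]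
  calc |K| * |X - y| ≤ |K| * (4 * C * (v ^ 2)⁻¹) := by gcongr
    _ = 4 * |K| * C * (v ^ 2)⁻¹ := by ring

theorem isBigO_inv_sq_inv_one_add_sq :
    (fun v : ℝ => (v ^ 2)⁻¹) =O[cocompact ℝ] fun v : ℝ => (1 + v ^ 2)⁻¹ := by
  refine IsBigO.of_bound 2 ?_
  filter_upwards [eventually_le_abs_cocompact_real 1] with v hv
  have hv1 : 1 ≤ v ^ 2 := (one_le_sq_iff_one_le_abs v).2 hv
  rw [Real.norm_of_nonneg (by positivity), Real.norm_of_nonneg (by positivity),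
    ← div_eq_mul_inv, inv_eq_one_div, div_le_div_iff₀ (by positivity) (by positivity)]
  linarith

theorem tendsto_four_mul_intCast_add_cocompact (ε : ℝ) :
    Tendsto (fun n : ℤ => 4 * (n : ℝ) + ε) cofinite (cocompact ℝ) :=
  ((tendsto_add_const_cocompact_real ε).comp
    (Homeomorph.mulLeft₀ (4 : ℝ) (by norm_num)).isClosedEmbedding.tendsto_cocompact).comp
    Int.tendsto_coe_cofinite

/-- A function on the lattice `4 ℤ + ε` which is `O(v⁻²)` is bounded by `C / (1 + v ^ 2)`. -/
theorem exists_bound_lattice_of_isBigO (ε : ℝ) {f : ℝ → ℝ}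
    (hf : f =O[cocompact ℝ] fun v : ℝ => (v ^ 2)⁻¹) :
    ∃ C > (0 : ℝ), ∀ n : ℤ, |f (4 * (n : ℝ) + ε)| ≤ C / (1 + (4 * (n : ℝ) + ε) ^ 2) := by
  obtain ⟨C, hC, h⟩ := bound_of_isBigO_cofinite
    ((hf.trans isBigO_inv_sq_inv_one_add_sq).comp_tendsto
      (tendsto_four_mul_intCast_add_cocompact ε))
  refine ⟨C, hC, fun n => ?_⟩
  have hpos : 0 < (1 + (4 * (n : ℝ) + ε) ^ 2)⁻¹ := by positivity
  have := @h n hpos.ne'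
  simp only [Function.comp_apply, Real.norm_eq_abs, abs_of_pos hpos] at this
  rwa [div_eq_mul_inv]

/-- with Λ̃ = 0, the coefficients of H differ from those of the
simplified operator H' by O(1/(1+vₙ²)). -/
theorem aps_coefficients_close_to_simplified
    (G ε α Λ : ℝ) (hG : 0 < G) (hε : ε ∈ Set.Ioo (0 : ℝ) 4) (hΛ : Λ = 0)
    (A B : ℝ → ℝ)
    (hA : ∃ R > (0 : ℝ), ∀ v : ℝ, R ≤ |v| → A v = 3 * Real.pi * G / 4 * |v|)
    (hB : ∃ C₀ > (0 : ℝ), ∃ M₀ > (0 : ℝ), ∀ v : ℝ, M₀ ≤ |v| →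
      abs (|v| * B v - 1 - α / v ^ 2) ≤ C₀ / v ^ 4)
    (hBpos : ∀ n : ℤ, 0 < B (4 * (n : ℝ) + ε))
    (c d : ℤ → ℝ)
    (hc : ∀ n : ℤ, c n = A (4 * (n : ℝ) + ε + 2) /
      Real.sqrt (B (4 * (n : ℝ) + ε) * B (4 * ((n : ℝ) + 1) + ε)))
    (hd : ∀ n : ℤ, d n = (A (4 * (n : ℝ) + ε + 2) + A (4 * (n : ℝ) + ε - 2)
      + Λ * |4 * (n : ℝ) + ε|) / B (4 * (n : ℝ) + ε))
    (H : (ℤ → ℂ) → (ℤ → ℂ))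
    (hH : ∀ (ψ : ℤ → ℂ) (n : ℤ),
      H ψ n = -(c (n - 1) : ℂ) * ψ (n - 1) - (c n : ℂ) * ψ (n + 1) + (d n : ℂ) * ψ n)
    :
    ∃ C > (0 : ℝ), ∀ n : ℤ,
      abs (c n - 3 * Real.pi * G / 4 * ((4 * (n : ℝ) + ε + 2) ^ 2 - 2 - α))
          ≤ C / (1 + (4 * (n : ℝ) + ε) ^ 2) ∧
      abs (d n - 3 * Real.pi * G / 4 * (2 * (4 * (n : ℝ) + ε) ^ 2 - 2 * α))
          ≤ C / (1 + (4 * (n : ℝ) + ε) ^ 2) := by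
  have hE := boundedAtFilter_inverseVolumeRemainder hB
  have hA' : ∀ᶠ v in cocompact ℝ, A v = 3 * Real.pi * G / 4 * |v| := by
    obtain ⟨R, -, hR⟩ := hA
    filter_upwards [eventually_le_abs_cocompact_real R] with v hv using hR v hv
  obtain ⟨C₁, hC₁, h₁⟩ := exists_bound_lattice_of_isBigO ε (isBigO_offDiagonal_coefficient hA' hE)
  obtain ⟨C₂, hC₂, h₂⟩ := exists_bound_lattice_of_isBigO ε (isBigO_diagonal_coefficient hA' hE)
  refine ⟨max C₁ C₂, lt_max_of_lt_left hC₁, fun n => ⟨?_, ?_⟩⟩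
  · rw [hc n, show 4 * ((n : ℝ) + 1) + ε = 4 * (n : ℝ) + ε + 4 by ring]
    exact (h₁ n).trans (by gcongr; exact le_max_left _ _)
  · rw [hd n, hΛ, zero_mul, add_zero]
    exact (h₂ n).trans (by gcongr; exact le_max_right _ _)
end
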